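/- Let Ω, β : ℝ → ℝ³, and let R, R̂ : ℝ → ℝ^{3×3} be differentiable with R(t), R̂(t) ∈ SO(3), R′(t) = R(t)·[Ω(t)]×, and R̂′(t) = R̂(t)·[Ω(t) + β(t)]× for all t. Set R̃(t) := R(t)ᵀR̂(t). Then R̃′(t) = R̃(t)[Ω(t)]× − [Ω(t)]×R̃(t) + R̃(t)[β(t)]×, and the normalized Euclidean distance satisfies d/dt ((1/4)Tr(I₃ − R̃(t))) = (1/2)·⟨vex(P_a(R̃(t))), β(t)⟩. -/

import Mathlib

/-!
Write `R̃ = RᵀR̂`, with `R̂` the curve `Rh`. Its derivative comes from the Leibniz rule,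
`[Ω]×ᵀ = -[Ω]×` and additivity of `x ↦ [x]×`. For the distance, the commutator `R̃[Ω]× - [Ω]×R̃` has trace zero, and
`Tr(A[β]×) = -2⟨vex(P_a(A)), β⟩` for every `A` (`trace_mul_skew`).
-/

open Matrix

noncomputable section

/-- The skew-symmetric matrix `[x]×` associated to `x ∈ ℝ³`. -/
def skew (x : Fin 3 → ℝ) : Matrix (Fin 3) (Fin 3) ℝ :=
  !![0, -x 2, x 1; x 2, 0, -x 0; -x 1, x 0, 0]

/-- The anti-symmetric projection `P_a(A) = (A - Aᵀ)/2`. -/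
def Pa (A : Matrix (Fin 3) (Fin 3) ℝ) : Matrix (Fin 3) (Fin 3) ℝ :=
  (1/2 : ℝ) • (A - Aᵀ)

/-- `vex(P_a(A)) = (1/2)(A₃₂−A₂₃, A₁₃−A₃₁, A₂₁−A₁₂)`. -/
def vexPa (A : Matrix (Fin 3) (Fin 3) ℝ) : Fin 3 → ℝ :=
  ![(1/2) * (A 2 1 - A 1 2), (1/2) * (A 0 2 - A 2 0), (1/2) * (A 1 0 - A 0 1)]

/-- Normalized Euclidean distance `‖A‖_I = (1/4)Tr(I₃ − A)`. -/
def normI (A : Matrix (Fin 3) (Fin 3) ℝ) : ℝ :=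
  (1/4) * (1 - A).trace

attribute [local instance] Matrix.normedAddCommGroup Matrix.normedSpace

theorem skew_transpose (x : Fin 3 → ℝ) : (skew x)ᵀ = -skew x := by
  ext i j
  fin_cases i <;> fin_cases j <;> simp [skew]

theorem skew_add (x y : Fin 3 → ℝ) : skew (x + y) = skew x + skew y := by
  ext i j
  fin_cases i <;> fin_cases j <;> simp [skew] <;> ring

theorem trace_mul_skew (A : Matrix (Fin 3) (Fin 3) ℝ) (x : Fin 3 → ℝ) :
    (A * skew x).trace = -2 * (vexPa A ⬝ᵥ x) := by
  simp [skew, vexPa, Matrix.trace, Matrix.mul_apply, dotProduct, Fin.sum_univ_three]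
  ring

/-- A curve of matrices is differentiable exactly when its entries are; the matrix norm in force
is the entrywise sup norm, so this is the statement for product spaces. -/
theorem hasDerivAt_matrix_iff {F : ℝ → Matrix (Fin 3) (Fin 3) ℝ}
    {F' : Matrix (Fin 3) (Fin 3) ℝ} {t : ℝ} :
    HasDerivAt F F' t ↔ ∀ i j, HasDerivAt (fun s => F s i j) (F' i j) t := by
  refine (hasDerivAt_pi (φ := F) (φ' := F')).trans (forall_congr' fun i => ?_)
  exact hasDerivAt_pi (φ := fun s => F s i) (φ' := F' i)

theorem hasDerivAt_transpose_mul {F G : ℝ → Matrix (Fin 3) (Fin 3) ℝ}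
    {F' G' : Matrix (Fin 3) (Fin 3) ℝ} {t : ℝ} (hF : HasDerivAt F F' t)
    (hG : HasDerivAt G G' t) :
    HasDerivAt (fun s => (F s)ᵀ * G s) (F'ᵀ * G t + (F t)ᵀ * G') t := by
  rw [hasDerivAt_matrix_iff] at *
  intro i j
  simp only [Matrix.add_apply, Matrix.mul_apply, Matrix.transpose_apply,
    ← Finset.sum_add_distrib]
  exact HasDerivAt.fun_sum fun k _ => (hF k i).mul (hG k j)

theorem hasDerivAt_trace {F : ℝ → Matrix (Fin 3) (Fin 3) ℝ}
    {F' : Matrix (Fin 3) (Fin 3) ℝ} {t : ℝ} (hF : HasDerivAt F F' t) :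
    HasDerivAt (fun s => (F s).trace) F'.trace t := by
  rw [hasDerivAt_matrix_iff] at hF
  exact HasDerivAt.fun_sum fun k _ => hF k k

/-- eqs. (27)–(28), noise-free content: if `R, R̂ ∈ SO(3)` evolve as
`Ṙ = R[Ω]×` and `R̂̇ = R̂[Ω+β]×`, then `R̃ = RᵀR̂` satisfies
`R̃′ = R̃[Ω]× − [Ω]×R̃ + R̃[β]×` and
`(d/dt)((1/4)Tr(I₃ − R̃)) = (1/2)⟨vex(P_a(R̃)), β⟩`. -/
theorem Rtilde_and_normI_dynamics (Ω β : ℝ → Fin 3 → ℝ)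
    (R Rh : ℝ → Matrix (Fin 3) (Fin 3) ℝ)
    (hSO : ∀ t, (R t)ᵀ * R t = 1 ∧ R t * (R t)ᵀ = 1 ∧ (R t).det = 1)
    (hSOh : ∀ t, (Rh t)ᵀ * Rh t = 1 ∧ Rh t * (Rh t)ᵀ = 1 ∧ (Rh t).det = 1)
    (hder : ∀ t, HasDerivAt R (R t * skew (Ω t)) t)
    (hderh : ∀ t, HasDerivAt Rh (Rh t * skew (Ω t + β t)) t) :
    (∀ t, HasDerivAt (fun s => (R s)ᵀ * Rh s)
        ((R t)ᵀ * Rh t * skew (Ω t) - skew (Ω t) * ((R t)ᵀ * Rh t)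
          + (R t)ᵀ * Rh t * skew (β t)) t) ∧
    (∀ t, HasDerivAt (fun s => (1/4) * (1 - (R s)ᵀ * Rh s).trace)
        ((1/2) * (vexPa ((R t)ᵀ * Rh t) ⬝ᵥ β t)) t) := by
  have key : ∀ t, HasDerivAt (fun s => (R s)ᵀ * Rh s)
        ((R t)ᵀ * Rh t * skew (Ω t) - skew (Ω t) * ((R t)ᵀ * Rh t)
          + (R t)ᵀ * Rh t * skew (β t)) t := by
    intro t
    convert hasDerivAt_transpose_mul (hder t) (hderh t) using 1
    rw [Matrix.transpose_mul, skew_transpose, skew_add]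
    noncomm_ring
  refine ⟨key, fun t => ?_⟩
  have h := ((hasDerivAt_trace (key t)).const_sub (1 : Matrix (Fin 3) (Fin 3) ℝ).trace).const_mul
    (1/4 : ℝ)
  simp only [← Matrix.trace_sub] at h
  refine h.congr_deriv ?_
  rw [Matrix.trace_add, Matrix.trace_sub, Matrix.trace_mul_comm (skew (Ω t)), sub_self,
    trace_mul_skew]
  ring
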